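/- arXiv:2010.13896 — 4 statements merged into one kernel-verified Lean document; each statement's English description precedes it below -/
import Mathlib

section
/- Let M be a d×d real matrix and suppose there exists a real symmetric positive definite d×d matrix P such that P − MᵀPM is positive definite. Then for every initial vector x₀ ∈ ℝᵈ, the iterates xₙ = Mⁿx₀ of the linear recursion x_{n+1} = M xₙ converge to 0 as n → ∞. -/
open Matrix Filter

lemma posDef_lower_bound {d : ℕ} (Q : Matrix (Fin d) (Fin d) ℝ) (hQ : Q.PosDef) :
    ∃ c : ℝ, 0 < c ∧ ∀ x : Fin d → ℝ, c * ‖x‖ ^ 2 ≤ x ⬝ᵥ (Q *ᵥ x) := by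
  have hpos : ∀ x : Fin d → ℝ, x ≠ 0 → 0 < x ⬝ᵥ (Q *ᵥ x) := by
    intro x hx
    simpa using hQ.dotProduct_mulVec_pos hx
  have hcont : Continuous (fun x : Fin d → ℝ => x ⬝ᵥ (Q *ᵥ x)) := by
    fun_prop
  rcases (Metric.sphere (0 : Fin d → ℝ) 1).eq_empty_or_nonempty with he | hne
  · refine ⟨1, one_pos, fun x => ?_⟩
    by_cases hx : x = 0
    · simp [hx]
    · exfalso
      have : ‖x‖⁻¹ • x ∈ Metric.sphere (0 : Fin d → ℝ) 1 := by
        simp [norm_smul, hx]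
      rw [he] at this
      exact this
  · obtain ⟨y, hy, hmin⟩ := (isCompact_sphere (0 : Fin d → ℝ) 1).exists_isMinOn hne
      hcont.continuousOn
    have hy0 : y ≠ 0 := by
      rintro rfl
      simp at hy
    refine ⟨_, hpos y hy0, fun x => ?_⟩
    by_cases hx : x = 0
    · simp [hx]
    · have hm : ‖x‖⁻¹ • x ∈ Metric.sphere (0 : Fin d → ℝ) 1 := by
        simp [norm_smul, hx]
      have h := hmin hm
      simp only [Set.mem_setOf_eq, mulVec_smul, smul_dotProduct, dotProduct_smul,
        smul_eq_mul] at h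
      have hn : 0 < ‖x‖ := norm_pos_iff.mpr hx
      calc _ ≤ (‖x‖⁻¹ * (‖x‖⁻¹ * (x ⬝ᵥ (Q *ᵥ x)))) * ‖x‖ ^ 2 := by gcongr
        _ = _ := by field_simp

/-- If there is a symmetric positive definite `P` with `P - MᵀPM` positive definite,
then every orbit of the linear recursion `x_{n+1} = M xₙ`, i.e. `xₙ = Mⁿ x₀`,
converges to `0`. -/
theorem lyapunov_implies_iterates_tendsto_zero {d : ℕ} (M : Matrix (Fin d) (Fin d) ℝ)
    (P : Matrix (Fin d) (Fin d) ℝ) (hP : P.PosDef) (hLyap : (P - Mᵀ * P * M).PosDef) :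
    ∀ x₀ : Fin d → ℝ,
      Tendsto (fun n : ℕ => (M ^ n) *ᵥ x₀) atTop (nhds 0) := by
  intro x₀
  obtain ⟨c, hc, hb⟩ := posDef_lower_bound _ hLyap
  set V : (Fin d → ℝ) → ℝ := fun x => x ⬝ᵥ (P *ᵥ x) with hV
  have hV0 : ∀ x, 0 ≤ V x := fun x => by
    simpa using hP.posSemidef.dotProduct_mulVec_nonneg x
  have hstep : ∀ x, c * ‖x‖ ^ 2 + V (M *ᵥ x) ≤ V x := by
    intro x
    have h := hb x
    have e : x ⬝ᵥ ((Mᵀ * P * M) *ᵥ x) = V (M *ᵥ x) := by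
      simp only [hV]
      rw [Matrix.mul_assoc, ← mulVec_mulVec, dotProduct_mulVec, vecMul_transpose,
        ← mulVec_mulVec]
    rw [sub_mulVec, dotProduct_sub, e] at h
    simp only [hV] at h ⊢
    linarith
  have hsum : ∀ n : ℕ, ∑ i ∈ Finset.range n, c * ‖(M ^ i) *ᵥ x₀‖ ^ 2
      + V ((M ^ n) *ᵥ x₀) ≤ V x₀ := by
    intro n
    induction n with
    | zero => simp
    | succ n ih =>
      have h := hstep ((M ^ n) *ᵥ x₀)
      rw [mulVec_mulVec, ← pow_succ'] at h
      rw [Finset.sum_range_succ]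
      linarith
  have hs : Summable (fun i : ℕ => c * ‖(M ^ i) *ᵥ x₀‖ ^ 2) :=
    summable_of_sum_range_le (c := V x₀) (fun i => by positivity)
      (fun n => by linarith [hsum n, hV0 ((M ^ n) *ᵥ x₀)])
  have h1 : Tendsto (fun i : ℕ => ‖(M ^ i) *ᵥ x₀‖ ^ 2) atTop (nhds 0) :=
    ((summable_mul_left_iff hc.ne').mp hs).tendsto_atTop_zero
  rw [tendsto_zero_iff_norm_tendsto_zero]
  have h2 := h1.sqrt
  simpa [Real.sqrt_sq] using h2
end

section
/- Let P be a d×d real symmetric positive definite matrix, let N be any d×d real matrix, and set Q := P⁻¹. Then the block matrix [[P, NᵀP], [PN, P]] is positive definite if and only if the block matrix [[Q, QNᵀ], [NQ, Q]] is positive definite. -/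
open Matrix

/-- Congruence by `diag(Q,Q)` with `Q = P⁻¹`: for symmetric positive definite `P`
and any `N`, `[[P, NᵀP],[PN, P]] ≻ 0` iff `[[Q, QNᵀ],[NQ, Q]] ≻ 0`. -/
theorem blockMatrix_posDef_iff_inv_blockMatrix_posDef {d : ℕ}
    (P N : Matrix (Fin d) (Fin d) ℝ) (hP : P.PosDef) :
    (Matrix.fromBlocks P (Nᵀ * P) (P * N) P).PosDef ↔
      (Matrix.fromBlocks P⁻¹ (P⁻¹ * Nᵀ) (N * P⁻¹) P⁻¹).PosDef := by
  have hu : IsUnit P := hP.isUnit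
  have hd : IsUnit P.det := (Matrix.isUnit_iff_isUnit_det P).1 hu
  have hQu : IsUnit P⁻¹ := Matrix.isUnit_nonsing_inv_iff.2 hu
  have hQ : (P⁻¹)ᴴ = P⁻¹ := hP.inv.isHermitian
  have hU : IsUnit (Matrix.fromBlocks P⁻¹ 0 0 P⁻¹) :=
    Matrix.isUnit_fromBlocks_zero₂₁.2 ⟨hQu, hQu⟩
  rw [← Matrix.IsUnit.posDef_star_left_conjugate_iff hU]
  have h : star (Matrix.fromBlocks P⁻¹ 0 0 P⁻¹) * Matrix.fromBlocks P (Nᵀ * P) (P * N) P *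
      Matrix.fromBlocks P⁻¹ 0 0 P⁻¹ =
      Matrix.fromBlocks P⁻¹ (P⁻¹ * Nᵀ) (N * P⁻¹) P⁻¹ := by
    rw [Matrix.star_eq_conjTranspose, Matrix.fromBlocks_conjTranspose, hQ,
      Matrix.fromBlocks_multiply, Matrix.fromBlocks_multiply]
    simp [← Matrix.mul_assoc, Matrix.nonsing_inv_mul P hd,
      Matrix.mul_nonsing_inv_cancel_right P _ hd]
  rw [h]
end

section
/- Let A be a d×d real matrix and B a d×p real matrix. There exist a p×d real matrix K and a d×d real symmetric positive definite matrix P with P − (A+BK)ᵀP(A+BK) positive definite if and only if there exist a d×d real symmetric positive definite matrix Q and a p×d real matrix Y such that the 2d×2d block matrix [[Q, QAᵀ + YᵀBᵀ], [AQ + BY, Q]] is positive definite. -/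
open Matrix

lemma posDef_blockDiag_aux {d : ℕ} {S Q : Matrix (Fin d) (Fin d) ℝ} (hQ : Q.PosDef) :
    (Matrix.fromBlocks S 0 0 Q).PosDef ↔ S.PosDef := by
  constructor
  · intro h
    have := h.submatrix (e := (Sum.inl : Fin d → Fin d ⊕ Fin d)) Sum.inl_injective
    exact this
  · intro hS
    refine Matrix.PosDef.of_dotProduct_mulVec_pos ?_ ?_
    · exact Matrix.IsHermitian.fromBlocks hS.1 (by simp) hQ.1
    · intro x hx
      obtain ⟨u, v, rfl⟩ : ∃ u v : Fin d → ℝ, x = Sum.elim u v :=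
        ⟨x ∘ Sum.inl, x ∘ Sum.inr, by simp⟩
      have e : star (Sum.elim u v) ⬝ᵥ (Matrix.fromBlocks S 0 0 Q *ᵥ Sum.elim u v)
          = star u ⬝ᵥ (S *ᵥ u) + star v ⬝ᵥ (Q *ᵥ v) := by
        simp [Matrix.fromBlocks_mulVec, dotProduct]
      rw [e]
      have h1 := hS.posSemidef.dotProduct_mulVec_nonneg u
      have h2 := hQ.posSemidef.dotProduct_mulVec_nonneg v
      by_cases hu : u = 0
      · have hv : v ≠ 0 := by
          rintro rfl
          apply hx
          subst hu
          ext i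
          cases i <;> rfl
        have := hQ.dotProduct_mulVec_pos hv
        linarith
      · have := hS.dotProduct_mulVec_pos hu
        linarith

lemma lmi_aux {d : ℕ} {P Q M : Matrix (Fin d) (Fin d) ℝ} (hP : P.PosDef) (hQ : Q.PosDef)
    (hPQ : P * Q = 1) :
    (Matrix.fromBlocks Q (Q * Mᵀ) (M * Q) Q).PosDef ↔ (P - Mᵀ * P * M).PosDef := by
  have hQP : Q * P = 1 := mul_eq_one_comm.mp hPQ
  have hPt : Pᵀ = P := by simpa using hP.1.eq
  have hQt : Qᵀ = Q := by simpa using hQ.1.eq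
  have hU : IsUnit (Matrix.fromBlocks Q (Q * Mᵀ * P) 0 (1 : Matrix (Fin d) (Fin d) ℝ)) := by
    refine IsUnit.of_mul_eq_one (Matrix.fromBlocks P (-(Mᵀ * P)) 0 1) ?_
    rw [Matrix.fromBlocks_multiply]
    simp [hQP, ← Matrix.mul_assoc]
  rw [← posDef_blockDiag_aux hQ]
  have : Matrix.fromBlocks Q (Q * Mᵀ * P) 0 (1 : Matrix (Fin d) (Fin d) ℝ) * Matrix.fromBlocks (P - Mᵀ * P * M) 0 0 Q
      * star (Matrix.fromBlocks Q (Q * Mᵀ * P) 0 (1 : Matrix (Fin d) (Fin d) ℝ)) =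
      Matrix.fromBlocks Q (Q * Mᵀ) (M * Q) Q := by
    rw [Matrix.star_eq_conjTranspose, Matrix.fromBlocks_conjTranspose,
      Matrix.fromBlocks_multiply, Matrix.fromBlocks_multiply]
    have h1 : Q * (P * (M * Q)) = M * Q := by rw [← Matrix.mul_assoc, hQP, Matrix.one_mul]
    simp [Matrix.conjTranspose_eq_transpose_of_trivial, hPt, hQt, Matrix.mul_assoc, hPQ, h1,
      Matrix.mul_sub, Matrix.sub_mul]
  rw [← this]
  exact Matrix.IsUnit.posDef_star_right_conjugate_iff hU

/-- LMI reformulation of stabilizability: there exist `K` and symmetric positive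
definite `P` with `P - (A+BK)ᵀP(A+BK) ≻ 0` iff there exist symmetric positive
definite `Q` and `Y` with `[[Q, QAᵀ+YᵀBᵀ],[AQ+BY, Q]] ≻ 0`. -/
theorem stabilizable_iff_LMI {d p : ℕ}
    (A : Matrix (Fin d) (Fin d) ℝ) (B : Matrix (Fin d) (Fin p) ℝ) :
    (∃ (K : Matrix (Fin p) (Fin d) ℝ) (P : Matrix (Fin d) (Fin d) ℝ),
        P.PosDef ∧ (P - (A + B * K)ᵀ * P * (A + B * K)).PosDef) ↔
      (∃ (Q : Matrix (Fin d) (Fin d) ℝ) (Y : Matrix (Fin p) (Fin d) ℝ),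
        Q.PosDef ∧
          (Matrix.fromBlocks Q (Q * Aᵀ + Yᵀ * Bᵀ) (A * Q + B * Y) Q).PosDef) := by
  constructor
  · rintro ⟨K, P, hP, h⟩
    have hd := (Matrix.isUnit_iff_isUnit_det P).mp hP.isUnit
    refine ⟨P⁻¹, K * P⁻¹, hP.inv, ?_⟩
    have hPt : (P⁻¹)ᵀ = P⁻¹ := by simpa using hP.inv.1.eq
    have := (lmi_aux hP hP.inv (Matrix.mul_nonsing_inv P hd)).mpr h
    convert this using 2
    · rw [Matrix.transpose_mul, hPt]
      simp [Matrix.mul_add, Matrix.mul_assoc]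
    · simp [Matrix.add_mul, Matrix.mul_assoc]
  · rintro ⟨Q, Y, hQ, h⟩
    have hd := (Matrix.isUnit_iff_isUnit_det Q).mp hQ.isUnit
    have hQt : (Q⁻¹)ᵀ = Q⁻¹ := by simpa using hQ.inv.1.eq
    refine ⟨Y * Q⁻¹, Q⁻¹, hQ.inv, ?_⟩
    refine (lmi_aux hQ.inv hQ (Matrix.nonsing_inv_mul Q hd)).mp ?_
    convert h using 2
    · rw [Matrix.transpose_add, Matrix.transpose_mul, Matrix.transpose_mul, hQt, Matrix.mul_add,
        Matrix.mul_assoc, ← Matrix.mul_assoc Q, Matrix.mul_nonsing_inv Q hd, Matrix.one_mul]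
    · rw [Matrix.add_mul, Matrix.mul_assoc, Matrix.mul_assoc, Matrix.nonsing_inv_mul Q hd,
        Matrix.mul_one]
end

section
/- Let A be a d×d real matrix and B a d×p real matrix. Suppose Q is a d×d real symmetric positive definite matrix and Y is a p×d real matrix such that the block matrix [[Q, QAᵀ + YᵀBᵀ], [AQ + BY, Q]] is positive definite. Then, setting K := YQ⁻¹ and P := Q⁻¹, the matrix P is symmetric positive definite, P − (A+BK)ᵀP(A+BK) is positive definite, and consequently A + BK is stable. -/
open Matrix

/-- A real square matrix is stable if every complex eigenvalue (root of its
characteristic polynomial over `ℂ`) has modulus strictly less than one. -/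
def IsStableMatrix {d : ℕ} (M : Matrix (Fin d) (Fin d) ℝ) : Prop :=
  ∀ lam : ℂ, (M.map (Complex.ofReal)).charpoly.IsRoot lam → ‖lam‖ < 1

lemma re_form_pos {d : ℕ} {R : Matrix (Fin d) (Fin d) ℝ} (hR : R.PosDef)
    {v : Fin d → ℂ} (hv : v ≠ 0) :
    0 < (star v ⬝ᵥ ((R.map Complex.ofReal) *ᵥ v)).re := by
  have key : (star v ⬝ᵥ ((R.map Complex.ofReal) *ᵥ v)).re =
      star (fun i => (v i).re) ⬝ᵥ (R *ᵥ fun i => (v i).re) +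
      star (fun i => (v i).im) ⬝ᵥ (R *ᵥ fun i => (v i).im) := by
    simp [dotProduct, mulVec, Finset.sum_add_distrib]
  rw [key]
  have h1 := hR.posSemidef.dotProduct_mulVec_nonneg (fun i => (v i).re)
  have h2 := hR.posSemidef.dotProduct_mulVec_nonneg (fun i => (v i).im)
  by_cases hx : (fun i => (v i).re) = 0
  · have hy : (fun i => (v i).im) ≠ 0 := by
      intro hy
      apply hv
      funext i
      exact Complex.ext (congrFun hx i) (congrFun hy i)
    have := hR.dotProduct_mulVec_pos hy
    linarith
  · have := hR.dotProduct_mulVec_pos hx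
    linarith

lemma stable_of_lyapunov {d : ℕ} {P M : Matrix (Fin d) (Fin d) ℝ} (hP : P.PosDef)
    (hS : (P - Mᵀ * P * M).PosDef) : IsStableMatrix M := by
  intro lam hlam
  have hdet : (Matrix.scalar (Fin d) lam - M.map Complex.ofReal).det = 0 := by
    rw [← Matrix.eval_charpoly]; exact hlam
  obtain ⟨v, hv, hv0⟩ := Matrix.exists_mulVec_eq_zero_iff.mpr hdet
  have hMv : (M.map Complex.ofReal) *ᵥ v = lam • v := by
    rw [Matrix.sub_mulVec, sub_eq_zero] at hv0
    rw [← hv0]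
    ext i
    simp [Matrix.scalar_apply, Matrix.mulVec_diagonal]
  have hmap : (P - Mᵀ * P * M).map Complex.ofReal =
      P.map Complex.ofReal - (M.map Complex.ofReal)ᴴ * P.map Complex.ofReal *
        M.map Complex.ofReal := by
    ext i j
    simp [Matrix.mul_apply]
  have h1 := re_form_pos hP hv
  have h2 := re_form_pos hS hv
  have e : star v ⬝ᵥ (((P - Mᵀ * P * M).map Complex.ofReal) *ᵥ v) =
      ((1 - ‖lam‖ ^ 2 : ℝ) : ℂ) * (star v ⬝ᵥ ((P.map Complex.ofReal) *ᵥ v)) := by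
    rw [hmap, Matrix.sub_mulVec, dotProduct_sub, Matrix.mul_assoc, ← Matrix.mulVec_mulVec,
      ← Matrix.mulVec_mulVec, hMv, Matrix.dotProduct_mulVec _ (M.map Complex.ofReal)ᴴ,
      ← Matrix.star_mulVec, hMv, star_smul, Matrix.mulVec_smul, dotProduct_smul, smul_dotProduct]
    have : (star lam) * lam = ((‖lam‖ ^ 2 : ℝ) : ℂ) := by
      simpa using Complex.conj_mul' lam
    rw [Complex.ofReal_sub, ← this]
    simp only [smul_eq_mul, Complex.ofReal_one]
    ring
  rw [e, Complex.re_ofReal_mul] at h2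
  have h3 := pos_of_mul_pos_left h2 h1.le
  nlinarith [norm_nonneg lam]

lemma lyapunov_of_block {d : ℕ} {Q M : Matrix (Fin d) (Fin d) ℝ} (hQ : Q.PosDef)
    (hL : (Matrix.fromBlocks Q (Q * Mᵀ) (M * Q) Q).PosDef) :
    (Q⁻¹ - Mᵀ * Q⁻¹ * M).PosDef := by
  have hu : IsUnit Q.det := (Matrix.isUnit_iff_isUnit_det _).mp hQ.isUnit
  have hPt : (Q⁻¹)ᵀ = Q⁻¹ := by
    have := hQ.inv.isHermitian
    simpa [Matrix.IsHermitian] using this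
  have hinj : Function.Injective (Matrix.fromRows Q⁻¹ (-(Q⁻¹ * M))).mulVec := by
    intro x y hxy
    have h1 : Q⁻¹ *ᵥ x = Q⁻¹ *ᵥ y := by
      funext i
      simpa [Matrix.fromRows_mulVec] using congrFun hxy (Sum.inl i)
    have := congrArg (Q *ᵥ ·) h1
    simpa [Matrix.mulVec_mulVec, Matrix.mul_nonsing_inv _ hu] using this
  have h := hL.conjTranspose_mul_mul_same hinj
  convert h using 1
  have e1 : Q⁻¹ * Q = 1 := Matrix.nonsing_inv_mul _ hu
  have e2 : Q * Q⁻¹ = 1 := Matrix.mul_nonsing_inv _ hu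
  have e3 : ∀ X : Matrix (Fin d) (Fin d) ℝ, Q * (Q⁻¹ * X) = X := fun X => by
    rw [← Matrix.mul_assoc, e2, Matrix.one_mul]
  have e4 : ∀ X : Matrix (Fin d) (Fin d) ℝ, Q⁻¹ * (Q * X) = X := fun X => by
    rw [← Matrix.mul_assoc, e1, Matrix.one_mul]
  rw [Matrix.mul_assoc (Matrix.fromRows _ _)ᴴ, Matrix.fromBlocks_mul_fromRows, Matrix.conjTranspose_eq_transpose_of_trivial,
    Matrix.transpose_fromRows, Matrix.fromCols_mul_fromRows]
  simp only [Matrix.transpose_neg, Matrix.transpose_mul, hPt, Matrix.mul_add, Matrix.mul_assoc,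
    Matrix.mul_neg, Matrix.neg_mul, e1, e2, e3, e4, Matrix.mul_one]
  abel

/-- Recovering the control matrix from an LMI solution: if `Q ≻ 0` and
`[[Q, QAᵀ+YᵀBᵀ],[AQ+BY, Q]] ≻ 0`, then with `K := YQ⁻¹` and `P := Q⁻¹`, `P` is
symmetric positive definite, `P - (A+BK)ᵀP(A+BK) ≻ 0`, and `A + BK` is stable. -/
theorem LMI_solution_gives_stabilizing_K {d p : ℕ}
    (A : Matrix (Fin d) (Fin d) ℝ) (B : Matrix (Fin d) (Fin p) ℝ)
    (Q : Matrix (Fin d) (Fin d) ℝ) (Y : Matrix (Fin p) (Fin d) ℝ)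
    (hQ : Q.PosDef)
    (hLMI : (Matrix.fromBlocks Q (Q * Aᵀ + Yᵀ * Bᵀ) (A * Q + B * Y) Q).PosDef) :
    (Q⁻¹).PosDef ∧
      (Q⁻¹ - (A + B * (Y * Q⁻¹))ᵀ * Q⁻¹ * (A + B * (Y * Q⁻¹))).PosDef ∧
      IsStableMatrix (A + B * (Y * Q⁻¹)) := by
  have hu : IsUnit Q.det := (Matrix.isUnit_iff_isUnit_det _).mp hQ.isUnit
  have hQt : Qᵀ = Q := by
    have := hQ.isHermitian
    simpa [Matrix.IsHermitian] using this
  have hMQ : A * Q + B * Y = (A + B * (Y * Q⁻¹)) * Q := by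
    rw [Matrix.add_mul, Matrix.mul_assoc B, Matrix.mul_assoc Y, Matrix.nonsing_inv_mul _ hu,
      Matrix.mul_one]
  have hQM : Q * Aᵀ + Yᵀ * Bᵀ = Q * (A + B * (Y * Q⁻¹))ᵀ := by
    have := congrArg Matrix.transpose hMQ
    rwa [Matrix.transpose_add, Matrix.transpose_mul, Matrix.transpose_mul, hQt,
      Matrix.transpose_mul (A + B * (Y * Q⁻¹)) Q, hQt] at this
  rw [hMQ, hQM] at hLMI
  have hS := lyapunov_of_block hQ hLMI
  exact ⟨hQ.inv, hS, stable_of_lyapunov hQ.inv hS⟩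
end
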